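/- Let C be a nonzero linear code of dimension k over a finite field. The sequence of generalized Hamming weights d_1(C), d_2(C), ..., d_k(C) is strictly increasing: d_v(C) < d_{v+1}(C) for all 1 ≤ v ≤ k-1. -/

import Mathlib

theorem generalized_hamming_weights_strictly_increasing
    (F : Type*) [Field F] [Fintype F] (nn k : ℕ)
    (C : Submodule F (Fin nn → F))
    (hk : Module.finrank F C = k) (hk0 : k ≠ 0) :
    ∀ v : ℕ, 1 ≤ v → v ≤ k - 1 →
      sInf {t : ℕ | ∃ D : Submodule F (Fin nn → F), D ≤ C ∧
          Module.finrank F D = v ∧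
          t = {i : Fin nn | ∃ c ∈ D, c i ≠ 0}.ncard} <
      sInf {t : ℕ | ∃ D : Submodule F (Fin nn → F), D ≤ C ∧
          Module.finrank F D = v + 1 ∧
          t = {i : Fin nn | ∃ c ∈ D, c i ≠ 0}.ncard} := by
  intro v hv hvk
  have hne : {t : ℕ | ∃ D : Submodule F (Fin nn → F), D ≤ C ∧
          Module.finrank F D = v + 1 ∧
          t = {i : Fin nn | ∃ c ∈ D, c i ≠ 0}.ncard}.Nonempty := by
    have hle : v + 1 ≤ Module.finrank F C := by omega
    let b := Module.finBasis F C
    let w : Fin (v + 1) → (Fin nn → F) := fun j => (b (Fin.castLE hle j) : Fin nn → F)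
    have hw : LinearIndependent F w :=
      (b.linearIndependent.comp (Fin.castLE hle) (Fin.castLE_injective hle)).map'
        C.subtype C.ker_subtype
    refine ⟨_, Submodule.span F (Set.range w), ?_, ?_, rfl⟩
    · rw [Submodule.span_le]
      rintro _ ⟨j, rfl⟩
      exact (b (Fin.castLE hle j)).2
    · rw [finrank_span_eq_card hw, Fintype.card_fin]
  obtain ⟨D, hDC, hD, ht⟩ := Nat.sInf_mem hne
  rw [ht]
  have hD0 : D ≠ ⊥ := by
    rintro rfl
    simp at hD
  obtain ⟨x, hx, hx0⟩ := Submodule.exists_mem_ne_zero_of_ne_bot hD0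
  obtain ⟨i, hi⟩ := Function.ne_iff.mp hx0
  let f : Module.Dual F D := (LinearMap.proj i : (Fin nn → F) →ₗ[F] F).comp D.subtype
  have hf : f ≠ 0 := by
    intro h
    exact hi (LinearMap.congr_fun h ⟨x, hx⟩)
  have hker := Module.Dual.finrank_ker_add_one_of_ne_zero hf
  let E : Submodule F (Fin nn → F) := (LinearMap.ker f).map D.subtype
  have hED : E ≤ D := Submodule.map_subtype_le D _
  have hE : Module.finrank F E = v := by
    have : Module.finrank F E = Module.finrank F (LinearMap.ker f) :=
      (Submodule.equivMapOfInjective D.subtype D.subtype_injective _).symm.finrank_eq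
    omega
  refine lt_of_le_of_lt (Nat.sInf_le ⟨E, hED.trans hDC, hE, rfl⟩) ?_
  refine Set.ncard_lt_ncard ?_ (Set.toFinite _)
  refine ⟨fun j ⟨c, hc, hcj⟩ => ⟨c, hED hc, hcj⟩, fun h => ?_⟩
  obtain ⟨c, hc, hci⟩ := h (show i ∈ {i : Fin nn | ∃ c ∈ D, c i ≠ 0} from ⟨x, hx, hi⟩)
  obtain ⟨y, hy, rfl⟩ := hc
  exact hci hy
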